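/- Necessity of the form (20) and of the Helmholtz-type conditions (21): let L = L(t,x,v,v′) be a smooth function on ℝ × ℝ^q × ℝ^q × ℝ^q whose Euler–Poisson expressions are of third order, i.e. there exists a smooth map Ẽ : ℝ × (ℝ^q)⁴ → ℝ^q such that E_a[L,c](t) = Ẽ_a(t, c(t), ċ(t), c̈(t), c⃛(t)) for every smooth curve c : ℝ → ℝ^q and every t. Then there exists a triple (A, B, c̃) of smooth functions of (t,x,v) only, with A skew-symmetric, such that Ẽ has the form (20), i.e. Ẽ_a(t,x,v,v′,v″) = A_{ab} v″^b + v′^c (∂A_{ab}/∂v^c) v′^b + B_{ab} v′^b + c̃_a, and (A, B, c̃) satisfies conditions (21). -/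

import Mathlib

noncomputable section

/-- Partial derivative in `t` of a function `F(t,x,v)` on `ℝ × ℝ^q × ℝ^q`. -/
def pdt {q : ℕ} (F : ℝ → (Fin q → ℝ) → (Fin q → ℝ) → ℝ)
    (t : ℝ) (x v : Fin q → ℝ) : ℝ :=
  deriv (fun s => F s x v) t

/-- Partial derivative in `x^a` of a function `F(t,x,v)`. -/
def pdx {q : ℕ} (a : Fin q) (F : ℝ → (Fin q → ℝ) → (Fin q → ℝ) → ℝ)
    (t : ℝ) (x v : Fin q → ℝ) : ℝ :=
  deriv (fun s : ℝ => F t (x + s • (Pi.single a 1 : Fin q → ℝ)) v) 0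

/-- Partial derivative in `v^a` of a function `F(t,x,v)`. -/
def pdv {q : ℕ} (a : Fin q) (F : ℝ → (Fin q → ℝ) → (Fin q → ℝ) → ℝ)
    (t : ℝ) (x v : Fin q → ℝ) : ℝ :=
  deriv (fun s : ℝ => F t x (v + s • (Pi.single a 1 : Fin q → ℝ))) 0

/-- The total-derivative operator `D₁ = ∂_t + v^a ∂_{x^a}`. -/
def D1 {q : ℕ} (F : ℝ → (Fin q → ℝ) → (Fin q → ℝ) → ℝ) :
    ℝ → (Fin q → ℝ) → (Fin q → ℝ) → ℝ :=
  fun t x v => pdt F t x v + ∑ a, v a * pdx a F t x v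

/-- Partial derivative in `x^a` of a Lagrange function `L(t,x,v,v′)`. -/
def pLx {q : ℕ} (a : Fin q) (L : ℝ → (Fin q → ℝ) → (Fin q → ℝ) → (Fin q → ℝ) → ℝ)
    (t : ℝ) (x v w : Fin q → ℝ) : ℝ :=
  deriv (fun s : ℝ => L t (x + s • (Pi.single a 1 : Fin q → ℝ)) v w) 0

/-- Partial derivative in `v^a` of a Lagrange function `L(t,x,v,v′)`. -/
def pLv {q : ℕ} (a : Fin q) (L : ℝ → (Fin q → ℝ) → (Fin q → ℝ) → (Fin q → ℝ) → ℝ)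
    (t : ℝ) (x v w : Fin q → ℝ) : ℝ :=
  deriv (fun s : ℝ => L t x (v + s • (Pi.single a 1 : Fin q → ℝ)) w) 0

/-- Partial derivative in `v′^a` of a Lagrange function `L(t,x,v,v′)`. -/
def pLw {q : ℕ} (a : Fin q) (L : ℝ → (Fin q → ℝ) → (Fin q → ℝ) → (Fin q → ℝ) → ℝ)
    (t : ℝ) (x v w : Fin q → ℝ) : ℝ :=
  deriv (fun s : ℝ => L t x v (w + s • (Pi.single a 1 : Fin q → ℝ))) 0

/-- The Euler–Poisson (Euler–Lagrange) expressions
`E_a[L,c](t) = ∂L/∂x^a − (d/dt)(∂L/∂v^a) + (d²/dt²)(∂L/∂v′^a)` of a second-order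
Lagrange function `L(t,x,v,v′)` along a curve `c`, all partial derivatives evaluated
along the prolonged curve `t ↦ (t, c(t), ċ(t), c̈(t))`. -/
def eulerPoisson {q : ℕ} (L : ℝ → (Fin q → ℝ) → (Fin q → ℝ) → (Fin q → ℝ) → ℝ)
    (c : ℝ → (Fin q → ℝ)) (t : ℝ) (a : Fin q) : ℝ :=
  pLx a L t (c t) (deriv c t) (deriv (deriv c) t)
    - deriv (fun τ => pLv a L τ (c τ) (deriv c τ) (deriv (deriv c) τ)) t
    + deriv (deriv (fun τ => pLw a L τ (c τ) (deriv c τ) (deriv (deriv c) τ))) t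

/-- The third-order expression (20):
`E_a = A_{ab} v″^b + v′^c (∂A_{ab}/∂v^c) v′^b + B_{ab} v′^b + c_a`. -/
def expr20 {q : ℕ} (A B : Fin q → Fin q → ℝ → (Fin q → ℝ) → (Fin q → ℝ) → ℝ)
    (cc : Fin q → ℝ → (Fin q → ℝ) → (Fin q → ℝ) → ℝ)
    (a : Fin q) (t : ℝ) (x v v' v'' : Fin q → ℝ) : ℝ :=
  (∑ b, A a b t x v * v'' b)
    + (∑ c, ∑ b, v' c * pdv c (A a b) t x v * v' b)
    + (∑ b, B a b t x v * v' b) + cc a t x v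

/-- The Helmholtz-type conditions (21) on a triple `(A,B,c)`, imposed at every point of
a set `Ω ⊆ ℝ × ℝ^q × ℝ^q`.  Square (round) brackets in the paper denote
antisymmetrization (symmetrization) with weight `1/k!`, written out explicitly here. -/
def cond21On {q : ℕ} (Ω : Set (ℝ × (Fin q → ℝ) × (Fin q → ℝ)))
    (A B : Fin q → Fin q → ℝ → (Fin q → ℝ) → (Fin q → ℝ) → ℝ)
    (cc : Fin q → ℝ → (Fin q → ℝ) → (Fin q → ℝ) → ℝ) : Prop :=
  ∀ p ∈ Ω, ∀ a b c : Fin q,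
    -- (i)  ∂_{v^{[a}} A_{bc]} = 0
    (pdv a (A b c) p.1 p.2.1 p.2.2 - pdv b (A a c) p.1 p.2.1 p.2.2
      - pdv c (A b a) p.1 p.2.1 p.2.2 - pdv a (A c b) p.1 p.2.1 p.2.2
      + pdv b (A c a) p.1 p.2.1 p.2.2 + pdv c (A a b) p.1 p.2.1 p.2.2) / 6 = 0 ∧
    -- (ii)  2 B_{[ab]} − 3 D₁ A_{ab} = 0
    2 * ((B a b p.1 p.2.1 p.2.2 - B b a p.1 p.2.1 p.2.2) / 2)
      - 3 * D1 (A a b) p.1 p.2.1 p.2.2 = 0 ∧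
    -- (iii)  2 ∂_{v^{[a}} B_{b]c} − 4 ∂_{x^{[a}} A_{b]c} + ∂_{x^c} A_{ab}
    --        + 2 D₁ ∂_{v^c} A_{ab} = 0
    2 * ((pdv a (B b c) p.1 p.2.1 p.2.2 - pdv b (B a c) p.1 p.2.1 p.2.2) / 2)
      - 4 * ((pdx a (A b c) p.1 p.2.1 p.2.2 - pdx b (A a c) p.1 p.2.1 p.2.2) / 2)
      + pdx c (A a b) p.1 p.2.1 p.2.2
      + 2 * D1 (pdv c (A a b)) p.1 p.2.1 p.2.2 = 0 ∧
    -- (iv)  ∂_{v^{(a}} c_{b)} − D₁ B_{(ab)} = 0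
    (pdv a (cc b) p.1 p.2.1 p.2.2 + pdv b (cc a) p.1 p.2.1 p.2.2) / 2
      - D1 (fun t x v => (B a b t x v + B b a t x v) / 2) p.1 p.2.1 p.2.2 = 0 ∧
    -- (v)  2 ∂_{v^c} ∂_{v^{[a}} c_{b]} − 4 ∂_{x^{[a}} B_{b]c} + D₁² ∂_{v^c} A_{ab}
    --      + 6 D₁ ∂_{x^{[a}} A_{bc]} = 0
    2 * pdv c (fun t x v => (pdv a (cc b) t x v - pdv b (cc a) t x v) / 2)
          p.1 p.2.1 p.2.2
      - 4 * ((pdx a (B b c) p.1 p.2.1 p.2.2 - pdx b (B a c) p.1 p.2.1 p.2.2) / 2)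
      + D1 (D1 (pdv c (A a b))) p.1 p.2.1 p.2.2
      + 6 * D1 (fun t x v =>
          (pdx a (A b c) t x v - pdx b (A a c) t x v - pdx c (A b a) t x v
            - pdx a (A c b) t x v + pdx b (A c a) t x v + pdx c (A a b) t x v) / 6)
          p.1 p.2.1 p.2.2 = 0 ∧
    -- (vi)  4 ∂_{x^{[a}} c_{b]} − 2 D₁ ∂_{v^{[a}} c_{b]} − D₁³ A_{ab} = 0
    4 * ((pdx a (cc b) p.1 p.2.1 p.2.2 - pdx b (cc a) p.1 p.2.1 p.2.2) / 2)
      - 2 * D1 (fun t x v => (pdv a (cc b) t x v - pdv b (cc a) t x v) / 2)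
          p.1 p.2.1 p.2.2
      - D1 (D1 (D1 (A a b))) p.1 p.2.1 p.2.2 = 0

end

/-! Along a curve the Euler–Poisson expressions contain the fourth derivative of the curve only
through `∂²L/∂v′^a∂v′^b`. Being of third order therefore forces `L = P_b v′^b + Q` with `P` and `Q`
depending on `(t, x, v)` only. For such an `L`
`E_a = ∂_{x^a} P_b v′^b + ∂_{x^a} Q + (d/dt) (A_{ab} v′^b + D₁ P_a - ∂_{v^a} Q)`, where
`A_{ab} = ∂_{v^b} P_a - ∂_{v^a} P_b`, and expanding the derivative gives (20). The operators
`∂_{x^a}`, `∂_{v^a}` and `D₁` commute except for `[∂_{v^a}, D₁] = ∂_{x^a}`, and the conditions (21)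
are formal consequences of these commutation relations.
-/

namespace Helmholtz

open scoped ContDiff
open VectorField

section Calculus

variable {E F : Type*} [NormedAddCommGroup E] [NormedSpace ℝ E] [NormedAddCommGroup F]
  [NormedSpace ℝ F]

lemma apply_add_eq_of_fderiv_segment {f : E → F} (hf : Differentiable ℝ f) {p u : E} {y : F}
    (h : ∀ s : ℝ, fderiv ℝ f (p + s • u) u = y) : f (p + u) = f p + y := by
  have hderiv (s : ℝ) : HasDerivAt (fun r : ℝ => f (p + r • u) - r • y) 0 s := by
    have hline : HasDerivAt (fun r : ℝ => p + r • u) u s := by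
      simpa using ((hasDerivAt_id s).smul_const u).const_add p
    simpa [h s] using! ((hf _).hasFDerivAt.comp_hasDerivAt s hline).sub
      ((hasDerivAt_id s).smul_const y)
  have hconst := is_const_of_deriv_eq_zero (fun s => (hderiv s).differentiableAt)
    (fun s => (hderiv s).deriv) 1 0
  simpa [sub_eq_iff_eq_add] using hconst

lemma deriv_deriv_comp {f : E → F} (hf : ContDiff ℝ 2 f) {γ γ' : ℝ → E} {γ'' : E} {t : ℝ}
    (hγ : ∀ s, HasDerivAt γ (γ' s) s) (hγ' : HasDerivAt γ' γ'' t) :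
    deriv (deriv fun s => f (γ s)) t
      = fderiv ℝ (fderiv ℝ f) (γ t) (γ' t) (γ' t) + fderiv ℝ f (γ t) γ'' := by
  have hfst : deriv (fun s => f (γ s)) = fun s => fderiv ℝ f (γ s) (γ' s) := funext fun s =>
    ((hf.differentiable two_ne_zero _).hasFDerivAt.comp_hasDerivAt s (hγ s)).deriv
  have hdf : DifferentiableAt ℝ (fderiv ℝ f) (γ t) :=
    (hf.fderiv_right (m := 1) le_rfl).differentiable one_ne_zero _
  rw [hfst]
  exact ((hdf.hasFDerivAt.comp_hasDerivAt t (hγ t)).clm_apply hγ').deriv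

lemma exists_contDiff_iteratedDeriv_eq {n : ℕ} (t : ℝ) (y : Fin n → F) :
    ∃ c : ℝ → F, ContDiff ℝ ∞ c ∧ ∀ k : Fin n, iteratedDeriv k c t = y k := by
  refine ⟨fun τ => ∑ k : Fin n, ((τ - t) ^ (k : ℕ) / (k : ℕ).factorial) • y k, by fun_prop,
    fun k => ?_⟩
  rw [iteratedDeriv_comp_sub_const (k : ℕ)
    (fun τ : ℝ => ∑ k : Fin n, (τ ^ (k : ℕ) / (k : ℕ).factorial) • y k) t]
  simp (disch := fun_prop) only [iteratedDeriv_fun_sum, iteratedDeriv_smul_const,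
    iteratedDeriv_div_const, sub_self, iteratedDeriv_fun_pow_zero]
  simp [ite_div, Fin.val_inj, Nat.factorial_ne_zero]

lemma exists_contDiff_jet_eq (t : ℝ) (x v w z u : F) :
    ∃ c : ℝ → F, ContDiff ℝ ∞ c ∧ c t = x ∧ deriv c t = v ∧ deriv (deriv c) t = w ∧
      deriv (deriv (deriv c)) t = z ∧ deriv (deriv (deriv (deriv c))) t = u := by
  obtain ⟨c, hc, hjet⟩ := exists_contDiff_iteratedDeriv_eq t ![x, v, w, z, u]
  simp only [iteratedDeriv_eq_iterate] at hjet
  exact ⟨c, hc, hjet 0, hjet 1, hjet 2, hjet 3, hjet 4⟩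

lemma map_eq_sum_single {ι R M : Type*} [Fintype ι] [DecidableEq ι] [Semiring R]
    [AddCommMonoid M] [Module R M] (l : (ι → R) →ₗ[R] M) (v : ι → R) :
    l v = ∑ i, v i • l (Pi.single i 1) := by
  conv_lhs => rw [pi_eq_sum_univ' v]
  simp only [map_sum, map_smul]

/-- The vector space of smooth maps `E → F`, bundled so that differential operators become linear
endomorphisms and identities between them can be checked by linear algebra. -/
def smoothMaps (E F : Type*) [NormedAddCommGroup E] [NormedSpace ℝ E] [NormedAddCommGroup F]
    [NormedSpace ℝ F] : Submodule ℝ (E → F) where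
  carrier := {f | ContDiff ℝ ∞ f}
  add_mem' {f g} (hf : ContDiff ℝ ∞ f) (hg : ContDiff ℝ ∞ g) := hf.add hg
  zero_mem' := contDiff_zero_fun (𝕜 := ℝ) (n := ∞)
  smul_mem' r f (hf : ContDiff ℝ ∞ f) := hf.const_smul r

lemma contDiff_coe (f : smoothMaps E F) : ContDiff ℝ ∞ (f : E → F) := f.2

lemma differentiable_coe (f : smoothMaps E F) : Differentiable ℝ (f : E → F) :=
  (contDiff_coe f).differentiable (by simp)

/-- The derivative of smooth maps along a smooth vector field `ξ`. -/
noncomputable def lieDeriv (ξ : E → E) (hξ : ContDiff ℝ ∞ ξ) :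
    smoothMaps E F →ₗ[ℝ] smoothMaps E F where
  toFun f := ⟨fun p => fderiv ℝ f p (ξ p), show ContDiff ℝ ∞ _ from
    ((contDiff_coe f).fderiv_right (m := ∞) (by simp)).clm_apply hξ⟩
  map_add' f g := by
    ext p
    simp [fderiv_add (differentiable_coe f p) (differentiable_coe g p)]
  map_smul' r f := by
    ext p
    simp [fderiv_const_smul (differentiable_coe f p)]

@[simp]
lemma lieDeriv_apply (ξ : E → E) (hξ : ContDiff ℝ ∞ ξ) (f : smoothMaps E F) (p : E) :
    (lieDeriv ξ hξ f : E → F) p = fderiv ℝ f p (ξ p) :=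
  rfl

lemma lieDeriv_lieDeriv_apply {ξ η : E → E} (hξ : ContDiff ℝ ∞ ξ) (hη : ContDiff ℝ ∞ η)
    (f : smoothMaps E F) (p : E) :
    (lieDeriv ξ hξ (lieDeriv η hη f) : E → F) p
      = (lieDeriv η hη (lieDeriv ξ hξ f) : E → F) p + fderiv ℝ f p (lieBracket ℝ ξ η p) := by
  rw [fderiv_apply_lieBracket (contDiff_coe f).contDiffAt
    (by simpa using ENat.LEInfty.out) (hη.differentiable (by simp) p)
    (hξ.differentiable (by simp) p)]
  exact (add_sub_cancel _ _).symm

end Calculus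

variable {q : ℕ}

/-- The smooth functions of `(t, x, v)`. -/
abbrev JetFn (q : ℕ) : Type :=
  smoothMaps (ℝ × (Fin q → ℝ) × (Fin q → ℝ)) ℝ

/-- A smooth function of `(t, x, v)` with its arguments taken one by one, the form in which `pdx`,
`pdv` and `D1` act on it. -/
def curried (f : JetFn q) : ℝ → (Fin q → ℝ) → (Fin q → ℝ) → ℝ :=
  fun t x v => (f : _ → ℝ) (t, x, v)

lemma curried_eq_zero {f : JetFn q} (hf : f = 0) (t : ℝ) (x v : Fin q → ℝ) :
    curried f t x v = 0 := by
  rw [hf]; rfl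

lemma curried_add (f g : JetFn q) (t : ℝ) (x v : Fin q → ℝ) :
    curried f t x v + curried g t x v = curried (f + g) t x v :=
  rfl

lemma curried_sub (f g : JetFn q) (t : ℝ) (x v : Fin q → ℝ) :
    curried f t x v - curried g t x v = curried (f - g) t x v :=
  rfl

lemma mul_curried (r : ℝ) (f : JetFn q) (t : ℝ) (x v : Fin q → ℝ) :
    r * curried f t x v = curried (r • f) t x v :=
  rfl

lemma curried_div (f : JetFn q) (r : ℝ) (t : ℝ) (x v : Fin q → ℝ) :
    curried f t x v / r = curried (r⁻¹ • f) t x v :=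
  div_eq_inv_mul _ _

/-- The operator `∂/∂x^a` on smooth functions of `(t, x, v)`. -/
noncomputable def dx (a : Fin q) : JetFn q →ₗ[ℝ] JetFn q :=
  lieDeriv (fun _ => (0, Pi.single a 1, 0)) contDiff_const

/-- The operator `∂/∂v^a` on smooth functions of `(t, x, v)`. -/
noncomputable def dv (a : Fin q) : JetFn q →ₗ[ℝ] JetFn q :=
  lieDeriv (fun _ => (0, 0, Pi.single a 1)) contDiff_const

/-- The operator `D₁ = ∂_t + v^a ∂_{x^a}` on smooth functions of `(t, x, v)`. -/
noncomputable def totalDeriv : JetFn q →ₗ[ℝ] JetFn q :=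
  lieDeriv (fun p => (1, p.2.2, 0)) (by fun_prop)

lemma fderiv_totalDeriv_field (p : ℝ × (Fin q → ℝ) × (Fin q → ℝ)) :
    fderiv ℝ (fun p : ℝ × (Fin q → ℝ) × (Fin q → ℝ) => ((1 : ℝ), p.2.2, (0 : Fin q → ℝ))) p
      = .prod 0 (.prod (.comp (.snd ℝ _ _) (.snd ℝ _ _)) 0) :=
  ((hasFDerivAt_const _ _).prodMk
    ((hasFDerivAt_snd.comp p hasFDerivAt_snd).prodMk (hasFDerivAt_const _ _))).fderiv

lemma dx_comm (a b : Fin q) (f : JetFn q) : dx a (dx b f) = dx b (dx a f) := by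
  ext p
  unfold dx
  rw [lieDeriv_lieDeriv_apply]
  simp [lieBracket]

lemma dv_comm (a b : Fin q) (f : JetFn q) : dv a (dv b f) = dv b (dv a f) := by
  ext p
  unfold dv
  rw [lieDeriv_lieDeriv_apply]
  simp [lieBracket]

lemma dv_dx (a b : Fin q) (f : JetFn q) : dv a (dx b f) = dx b (dv a f) := by
  ext p
  unfold dv dx
  rw [lieDeriv_lieDeriv_apply]
  simp [lieBracket]

lemma dx_totalDeriv (a : Fin q) (f : JetFn q) : dx a (totalDeriv f) = totalDeriv (dx a f) := by
  ext p
  unfold dx totalDeriv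
  rw [lieDeriv_lieDeriv_apply]
  simp [lieBracket, fderiv_totalDeriv_field, Prod.mk_zero_zero]

lemma dv_totalDeriv (a : Fin q) (f : JetFn q) :
    dv a (totalDeriv f) = totalDeriv (dv a f) + dx a f := by
  ext p
  unfold dv dx totalDeriv
  simp only [Submodule.coe_add, Pi.add_apply]
  rw [lieDeriv_lieDeriv_apply]
  simp [lieBracket, fderiv_totalDeriv_field]

lemma hasDerivAt_curried_dx (a : Fin q) (f : JetFn q) (t : ℝ) (x v : Fin q → ℝ) :
    HasDerivAt (fun s : ℝ => curried f t (x + s • Pi.single a 1) v) (curried (dx a f) t x v) 0 := by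
  have h := (differentiable_coe f (t, x, v)).hasFDerivAt.hasLineDerivAt (0, Pi.single a 1, 0)
  simpa [HasLineDerivAt, curried, dx] using h

lemma hasDerivAt_curried_dv (a : Fin q) (f : JetFn q) (t : ℝ) (x v : Fin q → ℝ) :
    HasDerivAt (fun s : ℝ => curried f t x (v + s • Pi.single a 1)) (curried (dv a f) t x v) 0 := by
  have h := (differentiable_coe f (t, x, v)).hasFDerivAt.hasLineDerivAt (0, 0, Pi.single a 1)
  simpa [HasLineDerivAt, curried, dv] using h

lemma pdx_curried (a : Fin q) (f : JetFn q) : pdx a (curried f) = curried (dx a f) :=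
  funext₃ fun t x v => (hasDerivAt_curried_dx a f t x v).deriv

lemma pdv_curried (a : Fin q) (f : JetFn q) : pdv a (curried f) = curried (dv a f) :=
  funext₃ fun t x v => (hasDerivAt_curried_dv a f t x v).deriv

lemma fderiv_jet_apply (f : JetFn q) (p : ℝ × (Fin q → ℝ) × (Fin q → ℝ)) (y w : Fin q → ℝ) :
    fderiv ℝ f.1 p (1, y, w) = fderiv ℝ f.1 p (1, 0, 0)
      + ∑ b, y b * (dx b f).1 p + ∑ b, w b * (dv b f).1 p := by
  have hx := map_eq_sum_single
    ((fderiv ℝ f.1 p).toLinearMap ∘ₗ .inr ℝ ℝ _ ∘ₗ .inl ℝ (Fin q → ℝ) (Fin q → ℝ)) y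
  have hv := map_eq_sum_single
    ((fderiv ℝ f.1 p).toLinearMap ∘ₗ .inr ℝ ℝ _ ∘ₗ .inr ℝ (Fin q → ℝ) (Fin q → ℝ)) w
  have hsplit : ((1, y, w) : ℝ × (Fin q → ℝ) × (Fin q → ℝ))
      = (1, 0, 0) + (0, y, 0) + (0, 0, w) := by simp
  rw [hsplit, map_add, map_add]
  exact congrArg₂ (fun r s => fderiv ℝ f.1 p (1, 0, 0) + r + s) hx hv

lemma D1_curried (f : JetFn q) : D1 (curried f) = curried (totalDeriv f) := by
  funext t x v
  have ht : pdt (curried f) t x v = fderiv ℝ f.1 (t, x, v) (1, 0, 0) :=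
    ((differentiable_coe f (t, x, v)).hasFDerivAt.comp_hasDerivAt t
      ((hasDerivAt_id t).prodMk (hasDerivAt_const t (x, v)))).deriv
  have h := fderiv_jet_apply f (t, x, v) v 0
  simp [D1, ht, pdx_curried, curried, totalDeriv, h]

/-- The Lagrange function `P_b v′^b + Q` with coefficients depending on `(t, x, v)` only. -/
def affineLagrangian (P : Fin q → JetFn q) (Q : JetFn q) :
    ℝ → (Fin q → ℝ) → (Fin q → ℝ) → (Fin q → ℝ) → ℝ :=
  fun t x v w => ∑ b, curried (P b) t x v * w b + curried Q t x v

lemma pLx_affineLagrangian (a : Fin q) (P : Fin q → JetFn q) (Q : JetFn q) :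
    pLx a (affineLagrangian P Q) = affineLagrangian (fun b => dx a (P b)) (dx a Q) := by
  funext t x v w
  exact ((HasDerivAt.fun_sum fun b _ => (hasDerivAt_curried_dx a (P b) t x v).mul_const (w b)).add
    (hasDerivAt_curried_dx a Q t x v)).deriv

lemma pLv_affineLagrangian (a : Fin q) (P : Fin q → JetFn q) (Q : JetFn q) :
    pLv a (affineLagrangian P Q) = affineLagrangian (fun b => dv a (P b)) (dv a Q) := by
  funext t x v w
  exact ((HasDerivAt.fun_sum fun b _ => (hasDerivAt_curried_dv a (P b) t x v).mul_const (w b)).add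
    (hasDerivAt_curried_dv a Q t x v)).deriv

lemma pLw_affineLagrangian (a : Fin q) (P : Fin q → JetFn q) (Q : JetFn q) (t : ℝ)
    (x v w : Fin q → ℝ) : pLw a (affineLagrangian P Q) t x v w = curried (P a) t x v := by
  have hline (b : Fin q) :
      HasDerivAt (fun s : ℝ => (w + s • (Pi.single a 1 : Fin q → ℝ)) b)
        ((Pi.single a 1 : Fin q → ℝ) b) 0 := by
    simpa using ((hasDerivAt_id (0 : ℝ)).mul_const ((Pi.single a 1 : Fin q → ℝ) b)).const_add (w b)
  refine ((HasDerivAt.fun_sum (u := .univ) fun b _ =>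
    (hline b).const_mul (curried (P b) t x v)).add_const (curried Q t x v)).deriv.trans ?_
  simp [Pi.single_apply]

lemma affineLagrangian_sub (P P' : Fin q → JetFn q) (Q Q' : JetFn q) (t : ℝ)
    (x v w : Fin q → ℝ) : affineLagrangian (P - P') (Q - Q') t x v w
      = affineLagrangian P Q t x v w - affineLagrangian P' Q' t x v w := by
  simp only [affineLagrangian, curried, Pi.sub_apply, Submodule.coe_sub, sub_mul,
    Finset.sum_sub_distrib]
  ring

section Prolongation

variable {c : ℝ → Fin q → ℝ} {t : ℝ}

lemma hasDerivAt_curried_prolongation (hc : DifferentiableAt ℝ c t)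
    (hc' : DifferentiableAt ℝ (deriv c) t) (f : JetFn q) :
    HasDerivAt (fun τ => curried f τ (c τ) (deriv c τ))
      (affineLagrangian (fun b => dv b f) (totalDeriv f) t (c t) (deriv c t) (deriv (deriv c) t))
      t := by
  have h := (differentiable_coe f (t, c t, deriv c t)).hasFDerivAt.comp_hasDerivAt t
    ((hasDerivAt_id t).prodMk (hc.hasDerivAt.prodMk hc'.hasDerivAt))
  refine h.congr_deriv ?_
  have hD := fderiv_jet_apply f (t, c t, deriv c t) (deriv c t) 0
  rw [fderiv_jet_apply]
  simp [affineLagrangian, curried, totalDeriv, hD, mul_comm, add_comm, add_left_comm]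

lemma hasDerivAt_affineLagrangian_prolongation (hc : DifferentiableAt ℝ c t)
    (hc' : DifferentiableAt ℝ (deriv c) t) (hc'' : DifferentiableAt ℝ (deriv (deriv c)) t)
    (A : Fin q → Fin q → JetFn q) (R : Fin q → JetFn q) (a : Fin q) :
    HasDerivAt (fun τ => affineLagrangian (A a) (R a) τ (c τ) (deriv c τ) (deriv (deriv c) τ))
      (expr20 (fun a b => curried (A a b)) (fun a b => curried (totalDeriv (A a b) + dv b (R a)))
        (fun a => curried (totalDeriv (R a))) a t (c t) (deriv c t) (deriv (deriv c) t)
        (deriv (deriv (deriv c)) t)) t := by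
  have h := (HasDerivAt.fun_sum (u := .univ) fun b _ =>
    (hasDerivAt_curried_prolongation hc hc' (A a b)).mul
      (hasDerivAt_pi.1 hc''.hasDerivAt b)).add (hasDerivAt_curried_prolongation hc hc' (R a))
  refine h.congr_deriv ?_
  simp only [affineLagrangian, expr20, pdv_curried, curried, Submodule.coe_add, Pi.add_apply,
    add_mul, Finset.sum_add_distrib, Finset.sum_mul]
  rw [Finset.sum_comm]
  simp only [mul_comm, mul_left_comm]
  ring

end Prolongation

section EulerPoisson

variable (P : Fin q → JetFn q) (Q : JetFn q)

/-- The matrix `A_{ab}` of the Euler–Poisson expressions (20) of `P_b v′^b + Q`. -/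
noncomputable def coeffA (a b : Fin q) : JetFn q :=
  dv b (P a) - dv a (P b)

/-- Up to sign, the part free of `v′` of the Ostrogradsky momentum
`∂L/∂v^a - (d/dt) (∂L/∂v′^a)` of `L = P_b v′^b + Q`; the remaining part is `-A_{ab} v′^b`. -/
noncomputable def negMomentum (a : Fin q) : JetFn q :=
  totalDeriv (P a) - dv a Q

/-- The matrix `B_{ab}` of the Euler–Poisson expressions (20) of `P_b v′^b + Q`. -/
noncomputable def coeffB (a b : Fin q) : JetFn q :=
  dx a (P b) + totalDeriv (coeffA P a b) + dv b (negMomentum P Q a)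

/-- The vector `c_a` of the Euler–Poisson expressions (20) of `P_b v′^b + Q`. -/
noncomputable def coeffC (a : Fin q) : JetFn q :=
  dx a Q + totalDeriv (negMomentum P Q a)

lemma eulerPoisson_affineLagrangian {c : ℝ → Fin q → ℝ} (hc : ContDiff ℝ 3 c) (t : ℝ)
    (a : Fin q) :
    eulerPoisson (affineLagrangian P Q) c t a
      = expr20 (fun a b => curried (coeffA P a b)) (fun a b => curried (coeffB P Q a b))
        (fun a => curried (coeffC P Q a)) a t (c t) (deriv c t) (deriv (deriv c) t)
        (deriv (deriv (deriv c)) t) := by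
  have hc' : ContDiff ℝ 2 (deriv c) := hc.deriv'
  have hc'' : ContDiff ℝ 1 (deriv (deriv c)) := hc'.deriv'
  have hd := hc.differentiable (by simp)
  have hd' := hc'.differentiable (by simp)
  have hd'' := hc''.differentiable (by simp)
  have hP : deriv (fun τ => curried (P a) τ (c τ) (deriv c τ))
      = fun τ => affineLagrangian (coeffA P a) (negMomentum P Q a) τ (c τ) (deriv c τ)
          (deriv (deriv c) τ)
        + affineLagrangian (fun b => dv a (P b)) (dv a Q) τ (c τ) (deriv c τ)
          (deriv (deriv c) τ) := by
    funext τ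
    rw [(hasDerivAt_curried_prolongation (hd τ) (hd' τ) (P a)).deriv]
    exact (eq_sub_iff_add_eq.1 (affineLagrangian_sub ..)).symm
  have hR := hasDerivAt_affineLagrangian_prolongation (hd t) (hd' t) (hd'' t) (coeffA P)
    (negMomentum P Q) a
  have hV := hasDerivAt_affineLagrangian_prolongation (hd t) (hd' t) (hd'' t)
    (fun a b => dv a (P b)) (fun a => dv a Q) a
  simp only [eulerPoisson, pLx_affineLagrangian, pLv_affineLagrangian, pLw_affineLagrangian, hP]
  rw [(hR.fun_add hV).deriv, hV.deriv]
  simp only [affineLagrangian, expr20, coeffB, coeffC, curried, Submodule.coe_add, Pi.add_apply,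
    add_mul, Finset.sum_add_distrib]
  ring

end EulerPoisson

section HelmholtzIdentities

variable (P : Fin q → JetFn q) (Q : JetFn q) (a b c : Fin q)

lemma coeffA_swap : coeffA P a b = -coeffA P b a :=
  (neg_sub _ _).symm

lemma dv_coeffA_cyclic :
    dv a (coeffA P b c) + dv b (coeffA P c a) + dv c (coeffA P a b) = 0 := by
  simp only [coeffA, map_sub, dv_comm]
  abel

lemma coeffB_sub_swap :
    coeffB P Q a b - coeffB P Q b a = (3 : ℝ) • totalDeriv (coeffA P a b) := by
  simp only [coeffB, coeffA, negMomentum, map_sub, dv_totalDeriv, dv_comm b a]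
  module

lemma dv_coeffB_sub_swap :
    dv a (coeffB P Q b c) - dv b (coeffB P Q a c)
      = (2 : ℝ) • (dx a (coeffA P b c) - dx b (coeffA P a c)) - dx c (coeffA P a b)
        - (2 : ℝ) • totalDeriv (dv c (coeffA P a b)) := by
  simp only [coeffB, coeffA, negMomentum, map_add, map_sub, dv_dx, dv_totalDeriv, dv_comm]
  module

lemma dv_coeffC_add_swap :
    dv a (coeffC P Q b) + dv b (coeffC P Q a)
      = totalDeriv (coeffB P Q a b + coeffB P Q b a) := by
  simp only [coeffC, coeffB, coeffA, negMomentum, map_add, map_sub, dv_dx, dx_totalDeriv,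
    dv_totalDeriv, dv_comm b a]
  module

lemma dv_dv_coeffC_sub_swap :
    dv c (dv a (coeffC P Q b) - dv b (coeffC P Q a))
      = (2 : ℝ) • (dx a (coeffB P Q b c) - dx b (coeffB P Q a c))
        - totalDeriv (totalDeriv (dv c (coeffA P a b)))
        - (2 : ℝ) • totalDeriv
          (dx a (coeffA P b c) + dx b (coeffA P c a) + dx c (coeffA P a b)) := by
  simp only [coeffC, coeffB, coeffA, negMomentum, map_add, map_sub, dv_dx, dx_totalDeriv,
    dv_totalDeriv, dv_comm, dx_comm]
  module

lemma dx_coeffC_sub_swap :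
    (2 : ℝ) • (dx a (coeffC P Q b) - dx b (coeffC P Q a))
      = totalDeriv (dv a (coeffC P Q b) - dv b (coeffC P Q a))
        + totalDeriv (totalDeriv (totalDeriv (coeffA P a b))) := by
  simp only [coeffC, coeffA, negMomentum, map_add, map_sub, dv_dx, dx_totalDeriv, dv_totalDeriv,
    dv_comm b a, dx_comm b a]
  module

lemma cond21On_coeff :
    cond21On Set.univ (fun a b => curried (coeffA P a b)) (fun a b => curried (coeffB P Q a b))
      (fun a => curried (coeffC P Q a)) := by
  intro p _ a b c
  simp only [pdx_curried, pdv_curried, D1_curried, curried_add, curried_sub, mul_curried,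
    curried_div]
  refine ⟨curried_eq_zero ?_ .., curried_eq_zero ?_ .., curried_eq_zero ?_ ..,
    curried_eq_zero ?_ .., curried_eq_zero ?_ .., curried_eq_zero ?_ ..⟩
  · simp only [coeffA_swap P b a, coeffA_swap P c b, coeffA_swap P a c, map_neg]
    linear_combination (norm := module) (3⁻¹ : ℝ) • dv_coeffA_cyclic P a b c
  · linear_combination (norm := module) coeffB_sub_swap P Q a b
  · linear_combination (norm := module) dv_coeffB_sub_swap P Q a b c
  · simp only [map_smul]
    linear_combination (norm := module) (2⁻¹ : ℝ) • dv_coeffC_add_swap P Q a b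
  · have h := dv_dv_coeffC_sub_swap P Q a b c
    simp only [coeffA_swap P b a, coeffA_swap P c b, coeffA_swap P a c, map_add, map_sub, map_neg,
      map_smul] at h ⊢
    linear_combination (norm := module) h
  · simp only [map_smul]
    linear_combination (norm := module) dx_coeffC_sub_swap P Q a b

end HelmholtzIdentities

section OrderReduction

/-- A function of `(t, x, v, v′)` as a function on the product space, where Fréchet derivatives make
sense. -/
def uncurried (L : ℝ → (Fin q → ℝ) → (Fin q → ℝ) → (Fin q → ℝ) → ℝ) :
    ℝ × (Fin q → ℝ) × (Fin q → ℝ) × (Fin q → ℝ) → ℝ :=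
  fun p => L p.1 p.2.1 p.2.2.1 p.2.2.2

variable {L : ℝ → (Fin q → ℝ) → (Fin q → ℝ) → (Fin q → ℝ) → ℝ}

lemma uncurried_pLv (hL : Differentiable ℝ (uncurried L)) (a : Fin q) :
    uncurried (pLv a L) = fun p => fderiv ℝ (uncurried L) p (0, 0, Pi.single a 1, 0) := by
  funext p
  simpa [lineDeriv, uncurried, pLv] using (hL p).lineDeriv_eq_fderiv (v := (0, 0, Pi.single a 1, 0))

lemma uncurried_pLw (hL : Differentiable ℝ (uncurried L)) (a : Fin q) :
    uncurried (pLw a L) = fun p => fderiv ℝ (uncurried L) p (0, 0, 0, Pi.single a 1) := by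
  funext p
  simpa [lineDeriv, uncurried, pLw] using (hL p).lineDeriv_eq_fderiv (v := (0, 0, 0, Pi.single a 1))

lemma contDiff_uncurried_pLv (hL : ContDiff ℝ ∞ (uncurried L)) (a : Fin q) :
    ContDiff ℝ ∞ (uncurried (pLv a L)) := by
  rw [uncurried_pLv (hL.differentiable (by simp))]
  exact (hL.fderiv_right (m := ∞) (by simp)).clm_apply contDiff_const

lemma contDiff_uncurried_pLw (hL : ContDiff ℝ ∞ (uncurried L)) (a : Fin q) :
    ContDiff ℝ ∞ (uncurried (pLw a L)) := by
  rw [uncurried_pLw (hL.differentiable (by simp))]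
  exact (hL.fderiv_right (m := ∞) (by simp)).clm_apply contDiff_const

lemma eulerPoisson_eq_fderiv {a : Fin q} (hv : Differentiable ℝ (uncurried (pLv a L)))
    (hw : ContDiff ℝ 2 (uncurried (pLw a L))) {c : ℝ → Fin q → ℝ} (hc : ContDiff ℝ 4 c) (t : ℝ) :
    let p := (t, c t, deriv c t, deriv (deriv c) t)
    let p' := (1, deriv c t, deriv (deriv c) t, deriv (deriv (deriv c)) t)
    let p'' := (0, deriv (deriv c) t, deriv (deriv (deriv c)) t, deriv (deriv (deriv (deriv c))) t)
    eulerPoisson L c t a = uncurried (pLx a L) p - fderiv ℝ (uncurried (pLv a L)) p p'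
      + (fderiv ℝ (fderiv ℝ (uncurried (pLw a L))) p p' p'
        + fderiv ℝ (uncurried (pLw a L)) p p'') := by
  have hc₁ : ContDiff ℝ 3 (deriv c) := hc.deriv'
  have hc₂ : ContDiff ℝ 2 (deriv (deriv c)) := hc₁.deriv'
  have hc₃ : ContDiff ℝ 1 (deriv (deriv (deriv c))) := hc₂.deriv'
  have hd (s : ℝ) := (hc.differentiable (by simp) s).hasDerivAt
  have hd₁ (s : ℝ) := (hc₁.differentiable (by simp) s).hasDerivAt
  have hd₂ (s : ℝ) := (hc₂.differentiable (by simp) s).hasDerivAt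
  have hd₃ (s : ℝ) := (hc₃.differentiable (by simp) s).hasDerivAt
  have hjet (s : ℝ) := (hasDerivAt_id s).prodMk ((hd s).prodMk ((hd₁ s).prodMk (hd₂ s)))
  have hjet' := (hasDerivAt_const t (1 : ℝ)).prodMk ((hd₁ t).prodMk ((hd₂ t).prodMk (hd₃ t)))
  exact congrArg₂ (fun r s => pLx a L t (c t) (deriv c t) (deriv (deriv c) t) - r + s)
    ((hv _).hasFDerivAt.comp_hasDerivAt t (hjet t)).deriv (deriv_deriv_comp hw hjet hjet')

lemma fderiv_pLw_eq_zero_of_third_order (hL : ContDiff ℝ ∞ (uncurried L)) {a : Fin q}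
    {E : ℝ → (Fin q → ℝ) → (Fin q → ℝ) → (Fin q → ℝ) → (Fin q → ℝ) → ℝ}
    (hE : ∀ c : ℝ → Fin q → ℝ, ContDiff ℝ ∞ c → ∀ t, eulerPoisson L c t a
      = E t (c t) (deriv c t) (deriv (deriv c) t) (deriv (deriv (deriv c)) t))
    (p : ℝ × (Fin q → ℝ) × (Fin q → ℝ) × (Fin q → ℝ)) (u : Fin q → ℝ) :
    fderiv ℝ (uncurried (pLw a L)) p (0, 0, 0, u) = 0 := by
  obtain ⟨t, x, v, w⟩ := p
  have hfourth (u : Fin q → ℝ) : fderiv ℝ (uncurried (pLw a L)) (t, x, v, w) (0, w, 0, u)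
      = E t x v w 0 - (uncurried (pLx a L) (t, x, v, w)
          - fderiv ℝ (uncurried (pLv a L)) (t, x, v, w) (1, v, w, 0)
        + fderiv ℝ (fderiv ℝ (uncurried (pLw a L))) (t, x, v, w) (1, v, w, 0) (1, v, w, 0)) := by
    obtain ⟨c, hc, hx, hv, hw, hz, hu⟩ := exists_contDiff_jet_eq t x v w 0 u
    have h := eulerPoisson_eq_fderiv ((contDiff_uncurried_pLv hL a).differentiable (by simp))
      ((contDiff_uncurried_pLw hL a).of_le ENat.LEInfty.out) (hc.of_le ENat.LEInfty.out) t
    simp only [hE c hc, hx, hv, hw, hz, hu] at h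
    linarith
  have h := sub_eq_zero.2 ((hfourth u).trans (hfourth 0).symm)
  rw [← map_sub] at h
  simpa using h

lemma exists_eq_affineLagrangian (hL : ContDiff ℝ ∞ (uncurried L))
    (hw : ∀ a p u, fderiv ℝ (uncurried (pLw a L)) p (0, 0, 0, u) = 0) :
    ∃ (P : Fin q → JetFn q) (Q : JetFn q), L = affineLagrangian P Q := by
  have hP (a : Fin q) : ContDiff ℝ ∞ fun p : ℝ × (Fin q → ℝ) × (Fin q → ℝ) =>
      uncurried (pLw a L) (p.1, p.2.1, p.2.2, 0) :=
    (contDiff_uncurried_pLw hL a).comp (by fun_prop)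
  have hQ : ContDiff ℝ ∞ fun p : ℝ × (Fin q → ℝ) × (Fin q → ℝ) =>
      uncurried L (p.1, p.2.1, p.2.2, 0) := hL.comp (by fun_prop)
  refine ⟨fun a => ⟨_, hP a⟩, ⟨_, hQ⟩, ?_⟩
  funext t x v w
  have hpLw (a : Fin q) (w : Fin q → ℝ) :
      uncurried (pLw a L) (t, x, v, w) = uncurried (pLw a L) (t, x, v, 0) := by
    simpa using apply_add_eq_of_fderiv_segment
      ((contDiff_uncurried_pLw hL a).differentiable (by simp)) (p := (t, x, v, 0))
      fun s => hw a _ w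
  have hsegment (s : ℝ) : fderiv ℝ (uncurried L) ((t, x, v, 0) + s • (0, 0, 0, w)) (0, 0, 0, w)
      = ∑ a, w a * uncurried (pLw a L) (t, x, v, 0) := by
    have h := map_eq_sum_single ((fderiv ℝ (uncurried L) (t, x, v, s • w)).toLinearMap ∘ₗ
      .inr ℝ ℝ _ ∘ₗ .inr ℝ (Fin q → ℝ) _ ∘ₗ .inr ℝ (Fin q → ℝ) (Fin q → ℝ)) w
    simp only [← hpLw _ (s • w), uncurried_pLw (hL.differentiable (by simp))]
    simpa using h
  have h := apply_add_eq_of_fderiv_segment (hL.differentiable (by simp)) hsegment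
  simpa [affineLagrangian, curried, uncurried, add_comm, mul_comm] using h

end OrderReduction

end Helmholtz

/-- Necessity of the form (20) and of the Helmholtz-type conditions
(21): if the Euler–Poisson expressions of a smooth second-order Lagrange function
`L(t,x,v,v′)` on `ℝ × ℝ^q × ℝ^q × ℝ^q` are of third order, i.e. factor through a smooth
map `Ẽ` of `(t, c, ċ, c̈, c⃛)`, then `Ẽ` is of the form (20) for some smooth triple
`(A,B,c̃)` depending on `(t,x,v)` only, with `A` skew-symmetric, satisfying (21). -/
theorem helmholtz_conditions_necessary {q : ℕ}
    (L : ℝ → (Fin q → ℝ) → (Fin q → ℝ) → (Fin q → ℝ) → ℝ)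
    (hL : ContDiff ℝ (⊤ : ℕ∞)
      (fun p : ℝ × (Fin q → ℝ) × (Fin q → ℝ) × (Fin q → ℝ) =>
        L p.1 p.2.1 p.2.2.1 p.2.2.2))
    (Etil : Fin q → ℝ → (Fin q → ℝ) → (Fin q → ℝ) → (Fin q → ℝ) → (Fin q → ℝ) → ℝ)
    (hEtil : ∀ a, ContDiff ℝ (⊤ : ℕ∞)
      (fun p : ℝ × (Fin q → ℝ) × (Fin q → ℝ) × (Fin q → ℝ) × (Fin q → ℝ) =>
        Etil a p.1 p.2.1 p.2.2.1 p.2.2.2.1 p.2.2.2.2))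
    (hthird : ∀ c : ℝ → (Fin q → ℝ), ContDiff ℝ (⊤ : ℕ∞) c → ∀ t : ℝ, ∀ a : Fin q,
      eulerPoisson L c t a
        = Etil a t (c t) (deriv c t) (deriv (deriv c) t) (deriv (deriv (deriv c)) t)) :
    ∃ A B : Fin q → Fin q → ℝ → (Fin q → ℝ) → (Fin q → ℝ) → ℝ,
    ∃ ctil : Fin q → ℝ → (Fin q → ℝ) → (Fin q → ℝ) → ℝ,
      (∀ a b, ContDiff ℝ (⊤ : ℕ∞)
        (fun p : ℝ × (Fin q → ℝ) × (Fin q → ℝ) => A a b p.1 p.2.1 p.2.2)) ∧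
      (∀ a b, ContDiff ℝ (⊤ : ℕ∞)
        (fun p : ℝ × (Fin q → ℝ) × (Fin q → ℝ) => B a b p.1 p.2.1 p.2.2)) ∧
      (∀ a, ContDiff ℝ (⊤ : ℕ∞)
        (fun p : ℝ × (Fin q → ℝ) × (Fin q → ℝ) => ctil a p.1 p.2.1 p.2.2)) ∧
      (∀ a b t x v, A a b t x v = - A b a t x v) ∧
      (∀ a : Fin q, ∀ t : ℝ, ∀ x v v' v'' : Fin q → ℝ,
        Etil a t x v v' v'' = expr20 A B ctil a t x v v' v'') ∧
      cond21On Set.univ A B ctil := by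
  obtain ⟨P, Q, rfl⟩ := Helmholtz.exists_eq_affineLagrangian hL fun a =>
    Helmholtz.fderiv_pLw_eq_zero_of_third_order hL fun c hc t => hthird c hc t a
  refine ⟨_, _, _, fun a b => Helmholtz.contDiff_coe _,
    fun a b => Helmholtz.contDiff_coe _, fun a => Helmholtz.contDiff_coe _,
    fun a b t x v => ?_, fun a t x v v' v'' => ?_, Helmholtz.cond21On_coeff P Q⟩
  · rw [Helmholtz.coeffA_swap]
    rfl
  · obtain ⟨c, hc, rfl, rfl, rfl, rfl, -⟩ := Helmholtz.exists_contDiff_jet_eq t x v v' v'' 0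
    rw [← hthird c hc, Helmholtz.eulerPoisson_affineLagrangian P Q (hc.of_le ENat.LEInfty.out)]
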